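/- Let S be an s-dimensional ℂ-subspace of functions X × U → ℂ consisting of input-state separable combinations, invariant under the augmented Koopman operator K^aug, with a basis Φ : X × U → ℂ^s decomposed as Φ(x,u) = G(u) H(x), where G : U → ℂ^{s×l} and H : X → ℂ^l, and suppose G(u) has full column rank for every u ∈ U (so that the Gram matrix G(u)^H G(u) ∈ ℂ^{l×l} is invertible for every u). Let A ∈ ℂ^{s×s} be a matrix such that Φ(T^aug(x,u)) = A Φ(x,u) for all (x,u). Then, defining the matrix-valued map 𝒜 : U → ℂ^{l×l} by 𝒜(u) = (G(u)^H G(u))^{-1} G(u)^H A G(u), one has H(T(x,u)) = 𝒜(u) H(x) for all (x,u) ∈ X × U. -/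

import Mathlib

open Matrix

/-- With `S`, basis `Φ = G(u)H(x)` as in Statement 9, `G(u)` of full
column rank for every `u` (so the Gram matrix `G(u)ᴴG(u)` is invertible), and
`A ∈ ℂ^{s×s}` with `Φ(T^aug(x,u)) = A Φ(x,u)`, the matrix-valued map
`𝒜(u) = (G(u)ᴴG(u))⁻¹ G(u)ᴴ A G(u)` satisfies `H(T(x,u)) = 𝒜(u) H(x)` for all `(x,u)`. -/
theorem separable_form_from_invariant_augmented
    {X U : Type*} [Nonempty X] [Nonempty U] (T : X × U → X)
    (S : Submodule ℂ (X × U → ℂ)) (s l : ℕ)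
    (hSep : ∀ f ∈ S, f ∈ Submodule.span ℂ
      {f : X × U → ℂ | ∃ (g : U → ℂ) (h : X → ℂ), ∀ (x : X) (u : U), f (x, u) = g u * h x})
    (hInv : ∀ g ∈ S, (fun p : X × U => g (T p, p.2)) ∈ S)
    (Φ : Fin s → X × U → ℂ)
    (hli : LinearIndependent ℂ Φ)
    (hspan : Submodule.span ℂ (Set.range Φ) = S)
    (G : U → Matrix (Fin s) (Fin l) ℂ) (H : Fin l → X → ℂ)
    (hdec : ∀ (x : X) (u : U) (i : Fin s), Φ i (x, u) = ∑ j, G u i j * H j x)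
    (hrank : ∀ u : U, (G u).rank = l)
    (A : Matrix (Fin s) (Fin s) ℂ)
    (hA : ∀ (x : X) (u : U) (i : Fin s),
      Φ i (T (x, u), u) = ∑ j, A i j * Φ j (x, u)) :
    ∀ (x : X) (u : U) (j : Fin l),
      H j (T (x, u)) =
        ∑ k, (((G u)ᴴ * G u)⁻¹ * (G u)ᴴ * A * G u) j k * H k x := by
  intro x u j
  have hunit : IsUnit ((G u)ᴴ * G u) := by
    have hr : ((G u)ᴴ * G u).rank = l := by
      open scoped ComplexOrder in
      rw [Matrix.rank_conjTranspose_mul_self, hrank]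
    rw [← Matrix.mulVec_surjective_iff_isUnit]
    have htop : LinearMap.range ((G u)ᴴ * G u).mulVecLin = ⊤ := by
      apply Submodule.eq_top_of_finrank_eq
      rw [← Matrix.rank, hr]
      simp
    exact LinearMap.range_eq_top.mp htop
  have hdet := (Matrix.isUnit_iff_isUnit_det _).mp hunit
  have key : G u *ᵥ (fun k => H k (T (x, u))) = A *ᵥ (G u *ᵥ (fun k => H k x)) := by
    funext i
    have h := hA x u i
    rw [hdec] at h
    simp only [hdec] at h
    exact h
  have h2 : (fun k => H k (T (x, u))) =
      (((G u)ᴴ * G u)⁻¹ * (G u)ᴴ * A * G u) *ᵥ (fun k => H k x) := by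
    have h3 := congrArg (fun v => (((G u)ᴴ * G u)⁻¹ * (G u)ᴴ) *ᵥ v) key
    simp only [Matrix.mulVec_mulVec] at h3
    rw [Matrix.mul_assoc _ _ (G u), Matrix.nonsing_inv_mul _ hdet, Matrix.one_mulVec] at h3
    rw [h3]
    simp only [Matrix.mul_assoc]
  exact congrFun h2 j
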